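/- Let p ≥ 2 and 0 < δ ≤ 1. Then there exist constants c_{p,δ} and c̃_{p,δ}, depending only on p and δ, with 0 < c_{p,δ} < 2/p, such that for all t ≥ 0: c_{p,δ} (t+δ)^{p/2} − c̃_{p,δ} ≤ 𝒢_δ(t) ≤ (2/p)(t+δ)^{p/2}. -/

import Mathlib

/-- `Gfun p δ t = ∫₀ᵗ s(s+δ)^{(p−2)/2}/√(1+δ+s²) ds`. -/
noncomputable def Gfun (p δ t : ℝ) : ℝ :=
  ∫ s in (0:ℝ)..t, s * (s + δ) ^ ((p - 2) / 2) / Real.sqrt (1 + δ + s ^ 2)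

/-! The integrand of `𝒢_δ` is `(s + δ)^{(p-2)/2}`, whose integral is explicit, times the weight
`s / √(1 + δ + s²)`. The weight is at most `1`, which gives the upper bound. It tends to `1`, so
for each `k < 1` the integrand eventually dominates `k (s + δ)^{(p-2)/2}`, and integrating costs
only an additive constant; hence every `c < 2/p` is admissible in the lower bound. -/

open Filter Set MeasureTheory Topology

theorem bddAbove_image_integral_of_eventually_nonpos {u : ℝ → ℝ} {a : ℝ}
    (hu : ∀ t, IntervalIntegrable u volume a t) (hneg : ∀ᶠ s in atTop, u s ≤ 0) :
    BddAbove ((fun t => ∫ s in a..t, u s) '' Ici a) := by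
  obtain ⟨b, hb⟩ := eventually_atTop.1 (hneg.and (eventually_ge_atTop a))
  have hab : a ≤ b := (hb b le_rfl).2
  have huabs : IntervalIntegrable (fun s => |u s|) volume a b := (hu b).abs
  refine ⟨∫ s in a..b, |u s|, ?_⟩
  rintro _ ⟨t, hat, rfl⟩
  rcases le_total t b with htb | hbt
  · calc ∫ s in a..t, u s
        ≤ ∫ s in a..t, |u s| := intervalIntegral.integral_mono hat (hu t) (hu t).abs
          fun s => le_abs_self (u s)
      _ ≤ ∫ s in a..b, |u s| := intervalIntegral.integral_mono_interval le_rfl hat htb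
          (ae_of_all _ fun s => abs_nonneg (u s)) huabs
  · have htail : ∫ s in b..t, u s ≤ 0 := by
      simpa using intervalIntegral.integral_nonneg (f := fun s => -u s) hbt
        fun s hs => neg_nonneg.2 (hb s hs.1).1
    calc ∫ s in a..t, u s
        = (∫ s in a..b, u s) + ∫ s in b..t, u s :=
          (intervalIntegral.integral_add_adjacent_intervals (hu b) ((hu b).symm.trans (hu t))).symm
      _ ≤ ∫ s in a..b, u s := add_le_of_nonpos_right htail
      _ ≤ ∫ s in a..b, |u s| := intervalIntegral.integral_mono hab (hu b) huabs
          fun s => le_abs_self (u s)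

theorem continuous_div_sqrt_add_sq {c : ℝ} (hc : 0 < c) :
    Continuous fun s : ℝ => s / √(c + s ^ 2) :=
  continuous_id.div (by fun_prop) fun s => (Real.sqrt_pos.2 (by positivity)).ne'

theorem div_sqrt_add_sq_le_one {c : ℝ} (hc : 0 ≤ c) (s : ℝ) : s / √(c + s ^ 2) ≤ 1 :=
  div_le_one_of_le₀ (Real.le_sqrt_of_sq_le (le_add_of_nonneg_left hc)) (Real.sqrt_nonneg _)

theorem tendsto_div_sqrt_add_sq_atTop (c : ℝ) :
    Tendsto (fun s : ℝ => s / √(c + s ^ 2)) atTop (𝓝 1) := by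
  have hquot : Tendsto (fun s : ℝ => c / s ^ 2) atTop (𝓝 0) :=
    tendsto_const_nhds.div_atTop (tendsto_pow_atTop two_ne_zero)
  have hlim : Tendsto (fun s : ℝ => (√(c / s ^ 2 + 1))⁻¹) atTop (𝓝 1) := by
    simpa using ((hquot.add_const 1).sqrt).inv₀ (by simp)
  refine hlim.congr' ?_
  filter_upwards [eventually_gt_atTop 0] with s hs
  rw [div_add_one (pow_ne_zero 2 hs.ne'), Real.sqrt_div' _ (sq_nonneg s), Real.sqrt_sq hs.le,
    inv_div]

theorem intervalIntegrable_add_rpow {r : ℝ} (hr : -1 < r) (δ a b : ℝ) :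
    IntervalIntegrable (fun s : ℝ => (s + δ) ^ r) volume a b := by
  have hrpow : IntervalIntegrable (fun x : ℝ => x ^ r) volume (a + δ) (b + δ) :=
    intervalIntegral.intervalIntegrable_rpow' hr
  simpa using hrpow.comp_add_right δ

theorem integral_add_rpow {r : ℝ} (hr : -1 < r) (δ a b : ℝ) :
    ∫ s in a..b, (s + δ) ^ r = ((b + δ) ^ (r + 1) - (a + δ) ^ (r + 1)) / (r + 1) := by
  rw [intervalIntegral.integral_comp_add_right (fun x : ℝ => x ^ r), integral_rpow (Or.inl hr)]

section Gfun

variable {p δ t : ℝ}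

theorem Gfun_eq_integral_weight_mul (p δ t : ℝ) :
    Gfun p δ t = ∫ s in (0 : ℝ)..t, s / √(1 + δ + s ^ 2) * (s + δ) ^ ((p - 2) / 2) := by
  simp only [Gfun, mul_div_right_comm]

theorem intervalIntegrable_Gfun_integrand (hp : 0 < p) (hδ : 0 ≤ δ) (a b : ℝ) :
    IntervalIntegrable (fun s : ℝ => s / √(1 + δ + s ^ 2) * (s + δ) ^ ((p - 2) / 2))
      volume a b :=
  (intervalIntegrable_add_rpow (by linarith) δ a b).continuousOn_mul
    (continuous_div_sqrt_add_sq (by positivity)).continuousOn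

theorem integral_add_rpow_half (hp : 0 < p) (δ t : ℝ) :
    ∫ s in (0 : ℝ)..t, (s + δ) ^ ((p - 2) / 2) =
      2 / p * ((t + δ) ^ (p / 2) - δ ^ (p / 2)) := by
  have hexp : (p - 2) / 2 + 1 = p / 2 := by ring
  rw [integral_add_rpow (by linarith), hexp, zero_add, div_eq_inv_mul, inv_div]

theorem Gfun_le_two_div_mul_rpow (hp : 0 < p) (hδ : 0 ≤ δ) (ht : 0 ≤ t) :
    Gfun p δ t ≤ 2 / p * (t + δ) ^ (p / 2) := by
  calc Gfun p δ t
      = ∫ s in (0 : ℝ)..t, s / √(1 + δ + s ^ 2) * (s + δ) ^ ((p - 2) / 2) :=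
        Gfun_eq_integral_weight_mul p δ t
    _ ≤ ∫ s in (0 : ℝ)..t, (s + δ) ^ ((p - 2) / 2) :=
        intervalIntegral.integral_mono_on ht (intervalIntegrable_Gfun_integrand hp hδ 0 t)
          (intervalIntegrable_add_rpow (by linarith) δ 0 t) fun s hs =>
            mul_le_of_le_one_left (Real.rpow_nonneg (add_nonneg hs.1 hδ) _)
              (div_sqrt_add_sq_le_one (by positivity) s)
    _ = 2 / p * ((t + δ) ^ (p / 2) - δ ^ (p / 2)) := integral_add_rpow_half hp δ t
    _ ≤ 2 / p * (t + δ) ^ (p / 2) := by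
        gcongr
        exact sub_le_self _ (Real.rpow_nonneg hδ _)

theorem eventually_mul_add_rpow_le_Gfun_integrand {k : ℝ} (hk : k < 1) (p δ : ℝ) :
    ∀ᶠ s : ℝ in atTop,
      k * (s + δ) ^ ((p - 2) / 2) ≤ s / √(1 + δ + s ^ 2) * (s + δ) ^ ((p - 2) / 2) := by
  filter_upwards [(tendsto_div_sqrt_add_sq_atTop (1 + δ)).eventually_const_le hk,
    eventually_ge_atTop (-δ)] with s hweight hs
  exact mul_le_mul_of_nonneg_right hweight (Real.rpow_nonneg (by linarith) _)

theorem exists_forall_mul_rpow_sub_le_Gfun {c : ℝ} (hp : 0 < p) (hδ : 0 ≤ δ) (hc : c < 2 / p) :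
    ∃ c' : ℝ, ∀ t : ℝ, 0 ≤ t → c * (t + δ) ^ (p / 2) - c' ≤ Gfun p δ t := by
  have hk : c * p / 2 < 1 := by
    rw [lt_div_iff₀ hp] at hc
    linarith
  have hpow (t : ℝ) :
      IntervalIntegrable (fun s : ℝ => c * p / 2 * (s + δ) ^ ((p - 2) / 2)) volume 0 t :=
    (intervalIntegrable_add_rpow (by linarith) δ 0 t).const_mul _
  have hG := intervalIntegrable_Gfun_integrand hp hδ 0
  obtain ⟨M, hM⟩ := bddAbove_image_integral_of_eventually_nonpos
    (fun t => (hpow t).sub (hG t))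
    ((eventually_mul_add_rpow_le_Gfun_integrand hk p δ).mono fun s hs => sub_nonpos.2 hs)
  refine ⟨M + c * δ ^ (p / 2), fun t ht => ?_⟩
  have hscale : c * p / 2 * (2 / p * ((t + δ) ^ (p / 2) - δ ^ (p / 2))) =
      c * (t + δ) ^ (p / 2) - c * δ ^ (p / 2) := by
    field_simp
  have hbound := hM (mem_image_of_mem _ (mem_Ici.2 ht))
  simp only [intervalIntegral.integral_sub (hpow t) (hG t), intervalIntegral.integral_const_mul,
    integral_add_rpow_half hp, hscale, ← Gfun_eq_integral_weight_mul] at hbound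
  linarith

theorem Gfun_two_sided_bounds_general {c : ℝ} (hp : 0 < p) (hδ : 0 ≤ δ) (hc : c < 2 / p) :
    ∃ c' : ℝ, ∀ t : ℝ, 0 ≤ t →
      c * (t + δ) ^ (p / 2) - c' ≤ Gfun p δ t ∧
      Gfun p δ t ≤ 2 / p * (t + δ) ^ (p / 2) := by
  obtain ⟨c', hlower⟩ := exists_forall_mul_rpow_sub_le_Gfun hp hδ hc
  exact ⟨c', fun t ht => ⟨hlower t ht, Gfun_le_two_div_mul_rpow hp hδ ht⟩⟩

end Gfun

/-- for `p ≥ 2` and `0 < δ ≤ 1` there are constants `c_{p,δ}` and `c̃_{p,δ}`,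
with `0 < c_{p,δ} < 2/p`, such that for all `t ≥ 0`:
`c_{p,δ}(t+δ)^{p/2} − c̃_{p,δ} ≤ 𝒢_δ(t) ≤ (2/p)(t+δ)^{p/2}`. -/
theorem Gfun_two_sided_bounds (p : ℝ) (hp : 2 ≤ p) (δ : ℝ) (hδ0 : 0 < δ) (hδ1 : δ ≤ 1) :
    ∃ c c' : ℝ, 0 < c ∧ c < 2 / p ∧ ∀ t : ℝ, 0 ≤ t →
      c * (t + δ) ^ (p / 2) - c' ≤ Gfun p δ t ∧
      Gfun p δ t ≤ 2 / p * (t + δ) ^ (p / 2) := by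
  have hp0 : 0 < p := two_pos.trans_le hp
  obtain ⟨c, hc0, hc⟩ := exists_between (show 0 < 2 / p by positivity)
  obtain ⟨c', hbounds⟩ := Gfun_two_sided_bounds_general hp0 hδ0.le hc
  exact ⟨c, c', hc0, hc, hbounds⟩
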